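/- arXiv:2110.13146 — 6 statements merged into one kernel-verified Lean document; each statement's English description precedes it below -/
import Mathlib

section
/- Let F be a field, n a natural number, and A an n×n matrix over F. Then the rank of A is at most the matching number of its support; that is, rank A ≤ the largest cardinality k for which there exist a set s of row indices with |s| = k and a function σ from row indices to column indices that is injective on s and satisfies A i (σ i) ≠ 0 for all i ∈ s. -/
/-- The rank of an `n × n` matrix over a field is at most the matching number
(term rank) of its support: the largest `k` such that there are a set `s` of
row indices of cardinality `k` and a map `σ` injective on `s` with
`A i (σ i) ≠ 0` for all `i ∈ s`. -/
theorem rank_le_matching_number {F : Type*} [Field F] {n : ℕ}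
    (A : Matrix (Fin n) (Fin n) F) :
    A.rank ≤ sSup {k : ℕ | ∃ (s : Finset (Fin n)) (σ : Fin n → Fin n),
      s.card = k ∧ Set.InjOn σ ↑s ∧ ∀ i ∈ s, A i (σ i) ≠ 0} := by
  classical
  apply le_csSup
  · refine ⟨n, ?_⟩
    rintro k ⟨s, σ, rfl, -, -⟩
    simpa using s.card_le_univ
  obtain ⟨κ, a, ha, hspan, hli⟩ := exists_linearIndependent' F A.row
  haveI : Finite κ := Finite.of_injective a ha
  haveI : Fintype κ := Fintype.ofFinite κ
  have hcard : Fintype.card κ = A.rank := by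
    rw [Matrix.rank_eq_finrank_span_row, ← hspan, finrank_span_eq_card hli]
  have hall : ∀ t : Finset κ, t.card ≤
      (t.biUnion fun i => Finset.univ.filter fun j => A (a i) j ≠ 0).card := by
    intro t
    set N := t.biUnion fun i => Finset.univ.filter fun j => A (a i) j ≠ 0 with hN
    have hlt : LinearIndependent F (fun i : t => A.row (a i)) :=
      hli.comp (fun i : t => (i : κ)) Subtype.val_injective
    have hle : LinearIndependent F (fun i : t => fun j : N => A (a i) j) := by
      rw [Fintype.linearIndependent_iff] at hlt ⊢
      intro g hg
      apply hlt g
      ext j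
      by_cases hj : j ∈ N
      · have := congrFun hg ⟨j, hj⟩
        simpa using this
      · simp only [Finset.sum_apply, Pi.smul_apply, Pi.zero_apply]
        apply Finset.sum_eq_zero
        intro i _
        have : A (a i) j = 0 := by
          by_contra h
          exact hj (Finset.mem_biUnion.2 ⟨i, i.2, by simpa using h⟩)
        simp [Matrix.row, this]
    simpa using hle.fintype_card_le_finrank
  obtain ⟨f, hf, hfm⟩ := (Finset.all_card_le_biUnion_card_iff_exists_injective _).1 hall
  refine ⟨Finset.univ.image a, fun i => if h : ∃ k, a k = i then f h.choose else i, ?_, ?_, ?_⟩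
  · rw [Finset.card_image_of_injective _ ha, Finset.card_univ, hcard]
  all_goals
    have key : ∀ k, (if h : ∃ k', a k' = a k then f h.choose else a k) = f k := by
      intro k
      have h : ∃ k', a k' = a k := ⟨k, rfl⟩
      rw [dif_pos h, ha h.choose_spec]
  · intro x hx y hy hxy
    simp only [Finset.coe_image, Finset.coe_univ, Set.image_univ, Set.mem_range] at hx hy
    obtain ⟨k, rfl⟩ := hx
    obtain ⟨l, rfl⟩ := hy
    simp only [key] at hxy
    rw [hf hxy]
  · intro i hi
    obtain ⟨k, -, rfl⟩ := Finset.mem_image.1 hi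
    simp only [key]
    simpa using hfm k
end

section
/- Let F be a field, n a natural number, and P a zero–nonzero pattern on n×n positions (a predicate P : indices × indices → Prop). If P admits a partial matching of size k — i.e., there exist a set s of row indices with |s| = k and a function σ injective on s with P i (σ i) for all i ∈ s — then there exists an n×n matrix A over F whose support is contained in P (A i j ≠ 0 only if P i j) and whose rank is at least k. -/
/-- If a zero–nonzero pattern `P` on `n × n` positions admits a partial matching
of size `k` (a set `s` of `k` row indices and a map `σ` injective on `s` with
`P i (σ i)` for all `i ∈ s`), then over any field `F` there is an `n × n` matrix
supported on `P` whose rank is at least `k`. -/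
theorem exists_matrix_supported_on_pattern_rank_ge {F : Type*} [Field F] {n k : ℕ}
    (P : Fin n → Fin n → Prop) (s : Finset (Fin n)) (σ : Fin n → Fin n)
    (hcard : s.card = k) (hinj : Set.InjOn σ ↑s) (hP : ∀ i ∈ s, P i (σ i)) :
    ∃ A : Matrix (Fin n) (Fin n) F, (∀ i j, A i j ≠ 0 → P i j) ∧ k ≤ A.rank := by
  classical
  refine ⟨Matrix.of fun i j => if i ∈ s ∧ j = σ i then 1 else 0, ?_, ?_⟩
  · intro i j h
    by_cases hc : i ∈ s ∧ j = σ i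
    · rw [hc.2]
      exact hP i hc.1
    · simp [hc] at h
  · have h1 : (Matrix.of fun i j => if i ∈ s ∧ j = σ i then (1 : F) else 0).submatrix
        (fun a : s => (a : Fin n)) (fun a : s => σ a) = 1 := by
      ext a b
      by_cases hab : a = b
      · subst hab
        simp
      · have hne : ¬ σ b = σ a := fun h => hab (Subtype.ext (hinj b.2 a.2 h)).symm
        simp [Matrix.one_apply, hab, hne]
    have h2 := Matrix.rank_submatrix_le
      (Matrix.of fun i j => if i ∈ s ∧ j = σ i then (1 : F) else 0)
      (fun a : s => (a : Fin n)) (fun a : s => σ a)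
    rw [h1, Matrix.rank_one, Fintype.card_coe, hcard] at h2
    exact h2
end

section
/- Let n be a natural number and A an n×n matrix with real entries such that the family of nonzero entries of A is algebraically independent over ℚ. Then rank A equals the matching number of the support of A, i.e., the largest cardinality k for which there exist a set s of row indices with |s| = k and a function σ injective on s with A i (σ i) ≠ 0 for all i ∈ s. -/
theorem aux_rows {m k : Type*} [Fintype m] [Fintype k] (M : Matrix m k ℝ) {r : ℕ} (hr : M.rank = r) :
    ∃ e : Fin r → m, Function.Injective e ∧ LinearIndependent ℝ (M.submatrix e id).row := by
  rw [Matrix.rank_eq_finrank_span_row] at hr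
  subst hr
  obtain ⟨f, hf, -, hli⟩ := Submodule.exists_fun_fin_finrank_span_eq ℝ (Set.range M.row)
  choose e he using hf
  have hE : (M.submatrix e id).row = f := by
    funext i
    rw [← he i]
    rfl
  refine ⟨e, ?_, by rw [hE]; exact hli⟩
  intro a b hab
  apply hli.injective
  rw [← he a, ← he b, hab]

theorem aux_upper {n : ℕ} (A : Matrix (Fin n) (Fin n) ℝ) :
    ∃ (s : Finset (Fin n)) (σ : Fin n → Fin n),
      s.card = A.rank ∧ Set.InjOn σ ↑s ∧ ∀ i ∈ s, A i (σ i) ≠ 0 := by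
  obtain ⟨e, he, hl⟩ := aux_rows A rfl
  have h1 : (A.submatrix e id).transpose.rank = A.rank := by
    rw [Matrix.rank_transpose, hl.rank_matrix, Fintype.card_fin]
  obtain ⟨g, hg, hl2⟩ := aux_rows _ h1
  have hu := (Matrix.linearIndependent_rows_iff_isUnit.1 hl2)
  have hd := ((Matrix.isUnit_iff_isUnit_det _).1 hu).ne_zero
  rw [Matrix.det_apply] at hd
  obtain ⟨τ, -, hτ⟩ := Finset.exists_ne_zero_of_sum_ne_zero hd
  have hp : ∀ i, A (e i) (g (τ i)) ≠ 0 := by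
    intro i h0
    apply hτ
    rw [Finset.prod_eq_zero (Finset.mem_univ i), smul_zero]
    simpa using h0
  refine ⟨Finset.univ.map ⟨e, he⟩, Function.extend e (fun i => g (τ i)) id, by simp, ?_, ?_⟩
  · intro x hx y hy hxy
    simp only [Finset.coe_map, Set.mem_image, Finset.coe_univ, Set.mem_univ, true_and,
      Function.Embedding.coeFn_mk] at hx hy
    obtain ⟨a, rfl⟩ := hx
    obtain ⟨b, rfl⟩ := hy
    rw [he.extend_apply, he.extend_apply] at hxy
    rw [τ.injective (hg hxy)]
  · intro i hi
    simp only [Finset.mem_map, Finset.mem_univ, true_and, Function.Embedding.coeFn_mk] at hi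
    obtain ⟨a, rfl⟩ := hi
    rw [he.extend_apply]
    exact hp a

theorem aux_lower {n : ℕ} (A : Matrix (Fin n) (Fin n) ℝ)
    (h : AlgebraicIndependent ℚ
      (fun p : {p : Fin n × Fin n // A p.1 p.2 ≠ 0} => A p.1.1 p.1.2))
    (s : Finset (Fin n)) (σ : Fin n → Fin n) (hσ : Set.InjOn σ ↑s)
    (hA : ∀ i ∈ s, A i (σ i) ≠ 0) : s.card ≤ A.rank := by
  classical
  let P : Matrix s s (MvPolynomial {p : Fin n × Fin n // A p.1 p.2 ≠ 0} ℚ) := fun i j =>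
    if h : A i (σ j) ≠ 0 then MvPolynomial.X ⟨(i, σ j), h⟩ else 0
  let B : Matrix s s ℝ := A.submatrix (fun i => (i : Fin n)) (fun j => σ j)
  have hB : (MvPolynomial.aeval (R := ℚ) (fun p : {p : Fin n × Fin n // A p.1 p.2 ≠ 0} =>
      A p.1.1 p.1.2)).mapMatrix P = B := by
    ext i j
    rw [AlgHom.mapMatrix_apply, Matrix.map_apply]
    by_cases h0 : A i (σ j) = 0 <;> simp [P, B, h0]
  have hP : P.det ≠ 0 := by
    intro h0
    have h1 : (MvPolynomial.aeval (R := ℚ) (fun p : {p : Fin n × Fin n // A p.1 p.2 ≠ 0} =>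
        if p.1.2 = σ p.1.1 then (1 : ℚ) else 0)).mapMatrix P = 1 := by
      ext i j
      rw [AlgHom.mapMatrix_apply, Matrix.map_apply]
      by_cases hij : i = j
      · subst hij
        simp [P, hA i i.2]
      · have : σ j ≠ σ i := fun hh => hij (Subtype.ext (hσ i.2 j.2 hh.symm))
        by_cases h0 : A i (σ j) = 0 <;> simp [P, h0, hij, this]
    have h2 := congrArg Matrix.det h1
    rw [← AlgHom.map_det, h0] at h2
    simp at h2
  have hBd : B.det ≠ 0 := by
    rw [← hB, ← AlgHom.map_det]
    intro h0
    exact hP (h (by rw [h0, map_zero]))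
  have hr : B.rank = s.card := by
    rw [Matrix.rank_of_isUnit B ((Matrix.isUnit_iff_isUnit_det _).2 hBd.isUnit)]
    simp
  rw [← hr]
  exact Matrix.rank_submatrix_le A _ _


/-- If the nonzero entries of a real `n × n` matrix `A` form a family that is
algebraically independent over `ℚ`, then the rank of `A` equals the matching
number (term rank) of its support. -/
theorem rank_eq_matching_number_of_algebraicIndependent {n : ℕ}
    (A : Matrix (Fin n) (Fin n) ℝ)
    (h : AlgebraicIndependent ℚ
      (fun p : {p : Fin n × Fin n // A p.1 p.2 ≠ 0} => A p.1.1 p.1.2)) :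
    A.rank = sSup {k : ℕ | ∃ (s : Finset (Fin n)) (σ : Fin n → Fin n),
      s.card = k ∧ Set.InjOn σ ↑s ∧ ∀ i ∈ s, A i (σ i) ≠ 0} := by

  refine ((IsGreatest.csSup_eq ⟨?_, ?_⟩).symm)
  · exact aux_upper A
  · rintro k ⟨s, σ, rfl, hσ, hA⟩
    exact aux_lower A h s σ hσ hA
end

section
/- Let n be a natural number and A an n×n matrix with real entries such that the family of nonzero entries of A is algebraically independent over ℚ. If the support of A contains a perfect matching — a permutation σ of the row indices with A i (σ i) ≠ 0 for all i — then det A ≠ 0. -/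
/-- If the nonzero entries of a real `n × n` matrix `A` are algebraically
independent over `ℚ` and the support of `A` contains a perfect matching (a
permutation `σ` with `A i (σ i) ≠ 0` for all `i`), then `det A ≠ 0`. -/
theorem det_ne_zero_of_algebraicIndependent_of_perfect_matching {n : ℕ}
    (A : Matrix (Fin n) (Fin n) ℝ)
    (h : AlgebraicIndependent ℚ
      (fun p : {p : Fin n × Fin n // A p.1 p.2 ≠ 0} => A p.1.1 p.1.2))
    (σ : Equiv.Perm (Fin n)) (hσ : ∀ i : Fin n, A i (σ i) ≠ 0) :
    A.det ≠ 0 := by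
  classical
  intro hdet
  let M : Matrix (Fin n) (Fin n) (MvPolynomial {p : Fin n × Fin n // A p.1 p.2 ≠ 0} ℚ) :=
    Matrix.of fun i j => if hij : A i j ≠ 0 then MvPolynomial.X ⟨(i, j), hij⟩ else 0
  have hM : (MvPolynomial.aeval (R := ℚ)
      (fun p : {p : Fin n × Fin n // A p.1 p.2 ≠ 0} => A p.1.1 p.1.2)).mapMatrix M = A := by
    ext i j
    by_cases hij : A i j = 0 <;> simp [M, hij]
  have hM0 : M.det = 0 := by
    apply h
    rw [AlgHom.map_det, hM, hdet, map_zero]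
  have hP : (MvPolynomial.aeval (R := ℚ)
      (fun p : {p : Fin n × Fin n // A p.1 p.2 ≠ 0} =>
        if σ p.1.1 = p.1.2 then (1 : ℚ) else 0)).mapMatrix M = σ.permMatrix ℚ := by
    ext i j
    by_cases hij : A i j = 0
    · have hne : σ i ≠ j := by
        rintro rfl
        exact hσ i hij
      simp [M, hij, hne, Equiv.Perm.permMatrix, PEquiv.toMatrix_apply]
    · simp [M, hij, Equiv.Perm.permMatrix, PEquiv.toMatrix_apply]
  have hd : (σ.permMatrix ℚ).det = 0 := by
    rw [← hP, ← AlgHom.map_det, hM0, map_zero]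
  rw [Matrix.det_permutation] at hd
  rcases Int.units_eq_one_or (Equiv.Perm.sign σ) with hs | hs <;> simp [hs] at hd
end

section
/- Let n, m be natural numbers with n ≥ 1, A an n×n complex matrix, and B an n×m complex matrix. If the pair (A,B) is controllable — i.e., the span of the columns of A^k · B for k < n equals ℂ^n — then for every complex number λ, m ≥ n − rank(A − λ·I), where I is the n×n identity matrix. In particular, m is at least the maximum geometric multiplicity of the eigenvalues of A. -/
/-- If the pair `(A, B)` is controllable (the span of the columns of
`A ^ k * B` for `k < n` is all of `ℂ^n`), then for every `λ ∈ ℂ` one has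
`m ≥ n - rank (A - λ • 1)`; in particular, `m` is at least the maximum
geometric multiplicity of the eigenvalues of `A`. -/
theorem controllable_ge_geometric_multiplicity {n m : ℕ} (hn : 1 ≤ n)
    (A : Matrix (Fin n) (Fin n) ℂ) (B : Matrix (Fin n) (Fin m) ℂ)
    (hctrl : Submodule.span ℂ {v : Fin n → ℂ | ∃ (k : ℕ) (j : Fin m),
        k < n ∧ v = fun i => (A ^ k * B) i j} = ⊤) :
    (∀ lam : ℂ, n - (A - lam • (1 : Matrix (Fin n) (Fin n) ℂ)).rank ≤ m) ∧
      sSup {d : ℕ | ∃ lam : ℂ,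
        d = n - (A - lam • (1 : Matrix (Fin n) (Fin n) ℂ)).rank} ≤ m := by
  have key : ∀ lam : ℂ, n - (A - lam • (1 : Matrix (Fin n) (Fin n) ℂ)).rank ≤ m := by
    intro lam
    set C := A - lam • (1 : Matrix (Fin n) (Fin n) ℂ) with hC
    have hmem : ∀ (k : ℕ) (v : Fin m → ℂ),
        (A ^ k * B).mulVec v ∈ LinearMap.range C.mulVecLin ⊔ LinearMap.range B.mulVecLin := by
      intro k v
      induction k with
      | zero =>
        apply Submodule.mem_sup_right
        exact ⟨v, by simp⟩
      | succ k ih =>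
        have h : (A ^ (k + 1) * B).mulVec v
            = C.mulVec ((A ^ k * B).mulVec v) + lam • (A ^ k * B).mulVec v := by
          have hA : A ^ (k + 1) * B = C * (A ^ k * B) + lam • (A ^ k * B) := by
            rw [hC, Matrix.sub_mul, pow_succ', Matrix.mul_assoc]
            simp
          rw [hA, Matrix.add_mulVec, Matrix.smul_mulVec, Matrix.mulVec_mulVec]
        rw [h]
        exact Submodule.add_mem _ (Submodule.mem_sup_left ⟨_, rfl⟩)
          (Submodule.smul_mem _ _ ih)
    have htop : LinearMap.range C.mulVecLin ⊔ LinearMap.range B.mulVecLin = ⊤ := by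
      rw [eq_top_iff, ← hctrl, Submodule.span_le]
      rintro v ⟨k, j, -, rfl⟩
      have h := hmem k (Pi.single j 1)
      rw [Matrix.mulVec_single_one] at h
      exact h
    have h1 := Submodule.finrank_add_le_finrank_add_finrank
      (LinearMap.range C.mulVecLin) (LinearMap.range B.mulVecLin)
    rw [htop, finrank_top, Module.finrank_fin_fun] at h1
    have h2 : B.rank ≤ m := by simpa using B.rank_le_card_width
    change n ≤ C.rank + B.rank at h1
    omega
  refine ⟨key, csSup_le ⟨_, 0, rfl⟩ ?_⟩
  rintro d ⟨lam, rfl⟩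
  exact key lam
end

section
/- Let n be a natural number with n ≥ 1 and A an n×n complex matrix. The minimum natural number m for which there exists an n×m complex matrix B making the pair (A,B) controllable — i.e., the span of the columns of A^k · B for k < n equals ℂ^n — is exactly the maximum over all complex numbers λ of n − rank(A − λ·I), i.e., the maximum geometric multiplicity of the eigenvalues of A. -/
theorem ect_avoid {V : Type*} [AddCommGroup V] [Module ℂ V] [FiniteDimensional ℂ V]
    (M : ℕ) : ∀ s : Set (Submodule ℂ V), s.Finite →
    (∀ R ∈ s, Module.finrank ℂ V ≤ Module.finrank ℂ R + M) →
    ∃ b : Fin M → V, ∀ R ∈ s, R ⊔ Submodule.span ℂ (Set.range b) = ⊤ := by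
  induction M with
  | zero =>
    intro s _ h
    refine ⟨Fin.elim0, fun R hR => ?_⟩
    have : R = ⊤ := Submodule.eq_top_of_finrank_eq
      (le_antisymm (Submodule.finrank_le R) (by simpa using h R hR))
    simp [this]
  | succ M ih =>
    intro s hs h
    have hfin : (s \ {⊤}).Finite := hs.subset Set.sdiff_subset
    obtain ⟨v, hv⟩ : ∃ v : V, ∀ R ∈ s, R ≠ ⊤ → v ∉ R := by
      have := Subspace.biUnion_ne_univ_of_top_notMem (k := ℂ) (E := V)
        (s := hfin.toFinset) (by simp)
      rw [Set.ne_univ_iff_exists_notMem] at this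
      obtain ⟨v, hv⟩ := this
      refine ⟨v, fun R hR hT hvR => hv ?_⟩
      simp only [Set.mem_iUnion]
      exact ⟨R, by simp [hR, hT], hvR⟩
    obtain ⟨b, hb⟩ := ih ((fun R => R ⊔ Submodule.span ℂ {v}) '' s) (hs.image _) (by
      rintro _ ⟨R, hR, rfl⟩
      by_cases hT : R = ⊤
      · subst hT
        change Module.finrank ℂ V ≤
          Module.finrank ℂ ((⊤ ⊔ Submodule.span ℂ {v} : Submodule ℂ V)) + M
        rw [top_sup_eq, finrank_top]
        omega
      · have hlt : R < R ⊔ Submodule.span ℂ {v} := by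
          refine lt_of_le_of_ne le_sup_left fun he => hv R hR hT ?_
          rw [he]
          exact Submodule.mem_sup_right (Submodule.mem_span_singleton_self v)
        have := Submodule.finrank_lt_finrank_of_lt hlt
        have := h R hR
        simp only
        omega)
    refine ⟨Fin.cons v b, fun R hR => ?_⟩
    have := hb _ ⟨R, hR, rfl⟩
    rw [Fin.range_cons, Set.insert_eq, Submodule.span_union, ← sup_assoc]
    exact this

theorem ect_pbh {V : Type*} [AddCommGroup V] [Module ℂ V] [FiniteDimensional ℂ V]
    (f : Module.End ℂ V) (W : Submodule ℂ V) (hW : W ≤ W.comap f)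
    (h : ∀ μ : ℂ, LinearMap.range (f - algebraMap ℂ (Module.End ℂ V) μ) ⊔ W = ⊤) : W = ⊤ := by
  by_contra hne
  have : Nontrivial (V ⧸ W) := Submodule.Quotient.nontrivial_iff.mpr hne
  obtain ⟨μ, hμ⟩ := Module.End.exists_eigenvalue (W.mapQ W f hW)
  have hsurj : Function.Surjective
      (W.mapQ W f hW - algebraMap ℂ (Module.End ℂ (V ⧸ W)) μ) := by
    intro q
    obtain ⟨v, rfl⟩ := W.mkQ_surjective q
    have hv : v ∈ LinearMap.range (f - algebraMap ℂ (Module.End ℂ V) μ) ⊔ W := by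
      rw [h]; trivial
    obtain ⟨_, ⟨u, rfl⟩, w, hw, rfl⟩ := Submodule.mem_sup.mp hv
    refine ⟨W.mkQ u, ?_⟩
    have : W.mkQ w = 0 := by simpa using hw
    rw [map_add, this]
    simp [Module.algebraMap_end_apply]
  have hinj := LinearMap.injective_iff_surjective.mpr hsurj
  obtain ⟨q, hq⟩ := hμ.exists_hasEigenvector
  apply hq.2
  apply hinj
  simp [Module.algebraMap_end_apply, hq.apply_eq_smul]

/-- Exact controllability theory: the minimum number `m` of columns of a matrix
`B` making the pair `(A, B)` controllable (the span of the columns of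
`A ^ k * B` for `k < n` is all of `ℂ^n`) equals the maximum over `λ ∈ ℂ` of
`n - rank (A - λ • 1)`, i.e. the maximum geometric multiplicity of the
eigenvalues of `A`. -/
theorem min_controllers_eq_max_geometric_multiplicity {n : ℕ} (hn : 1 ≤ n)
    (A : Matrix (Fin n) (Fin n) ℂ) :
    sInf {m : ℕ | ∃ B : Matrix (Fin n) (Fin m) ℂ,
        Submodule.span ℂ {v : Fin n → ℂ | ∃ (k : ℕ) (j : Fin m),
          k < n ∧ v = fun i => (A ^ k * B) i j} = ⊤}
      = sSup {d : ℕ | ∃ lam : ℂ,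
          d = n - (A - lam • (1 : Matrix (Fin n) (Fin n) ℂ)).rank} := by
  set D : Set ℕ := {d : ℕ | ∃ lam : ℂ,
          d = n - (A - lam • (1 : Matrix (Fin n) (Fin n) ℂ)).rank} with hD
  have hbdd : BddAbove D := ⟨n, by rintro d ⟨l, rfl⟩; exact Nat.sub_le _ _⟩
  set f : Module.End ℂ (Fin n → ℂ) := Matrix.toLin' A with hf
  have hsub : ∀ l : ℂ, f - algebraMap ℂ (Module.End ℂ (Fin n → ℂ)) l
      = (A - l • (1 : Matrix (Fin n) (Fin n) ℂ)).mulVecLin := by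
    intro l
    apply LinearMap.ext
    intro v
    simp [hf, Module.algebraMap_end_apply, Matrix.sub_mulVec, Matrix.smul_mulVec]
  have hcol : ∀ (m : ℕ) (B : Matrix (Fin n) (Fin m) ℂ) (k : ℕ) (j : Fin m),
      (fun i => (A ^ k * B) i j) = (A ^ k).mulVec (B.col j) := by
    intro m B k j
    ext i
    simp [Matrix.mul_apply, Matrix.mulVec, dotProduct, Matrix.col]
  have hmem : sSup D ∈ {m : ℕ | ∃ B : Matrix (Fin n) (Fin m) ℂ,
        Submodule.span ℂ {v : Fin n → ℂ | ∃ (k : ℕ) (j : Fin m),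
          k < n ∧ v = fun i => (A ^ k * B) i j} = ⊤} := by
    obtain ⟨b, hb⟩ := ect_avoid (V := Fin n → ℂ) (sSup D)
      ((fun l => LinearMap.range (f - algebraMap ℂ (Module.End ℂ (Fin n → ℂ)) l)) ''
        {l | f.HasEigenvalue l}) (f.finite_hasEigenvalue.image _) (by
        rintro _ ⟨l, _, rfl⟩
        have h1 : n - (A - l • (1 : Matrix (Fin n) (Fin n) ℂ)).rank ≤ sSup D :=
          le_csSup hbdd ⟨l, rfl⟩
        rw [Matrix.rank, ← hsub] at h1
        simp only
        rw [Module.finrank_fin_fun]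
        omega)
    refine ⟨Matrix.of fun i j => b j i, ?_⟩
    set B : Matrix (Fin n) (Fin (sSup D)) ℂ := Matrix.of fun i j => b j i with hB
    have hBc : ∀ j, B.col j = b j := fun j => rfl
    simp only [hcol, hBc]
    set W := Submodule.span ℂ {v : Fin n → ℂ | ∃ (k : ℕ) (j : Fin (sSup D)),
          k < n ∧ v = (A ^ k).mulVec (b j)} with hWdef
    have hpow : ∀ (k : ℕ) (j : Fin (sSup D)), (A ^ k).mulVec (b j) ∈ W := by
      intro k j
      rw [Matrix.pow_eq_aeval_mod_charpoly A k]
      rw [Polynomial.aeval_eq_sum_range' (n := n), Matrix.sum_mulVec]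
      · refine Submodule.sum_mem _ fun i hi => ?_
        rw [Matrix.smul_mulVec]
        exact Submodule.smul_mem _ _ (Submodule.subset_span ⟨i, j, by simpa using hi, rfl⟩)
      · have h1 := Polynomial.natDegree_modByMonic_lt (Polynomial.X ^ k) A.charpoly_monic
          (by
            intro h
            have := A.charpoly_natDegree_eq_dim
            rw [h] at this
            simp at this
            omega)
        rwa [A.charpoly_natDegree_eq_dim, Fintype.card_fin] at h1
    refine ect_pbh f W ?_ ?_
    · rw [hWdef, Submodule.span_le, ← hWdef]
      rintro _ ⟨k, j, _, rfl⟩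
      have := hpow (k + 1) j
      rw [pow_succ', ← Matrix.mulVec_mulVec] at this
      simpa [hf] using this
    · intro μ
      by_cases hμ : f.HasEigenvalue μ
      · rw [eq_top_iff, ← hb _ ⟨μ, hμ, rfl⟩]
        refine sup_le_sup le_rfl (Submodule.span_le.mpr ?_)
        rintro _ ⟨j, rfl⟩
        simpa using hpow 0 j
      · have hk : LinearMap.ker (f - algebraMap ℂ (Module.End ℂ (Fin n → ℂ)) μ) = ⊥ := by
          rw [Module.End.hasEigenvalue_iff, not_not, Module.End.eigenspace_def] at hμ
          exact hμ
        rw [LinearMap.ker_eq_bot_iff_range_eq_top.mp hk, top_sup_eq]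
  apply le_antisymm
  · exact Nat.sInf_le hmem
  · refine le_csInf ⟨_, hmem⟩ ?_
    rintro m ⟨B, hBt⟩
    refine csSup_le ⟨_, 0, rfl⟩ ?_
    rintro _ ⟨l, rfl⟩
    set R := LinearMap.range (A - l • (1 : Matrix (Fin n) (Fin n) ℂ)).mulVecLin with hR
    set S := Submodule.span ℂ (Set.range B.col) with hS
    have key : ∀ (k : ℕ) (j : Fin m), (A ^ k).mulVec (B.col j) ∈ R ⊔ S := by
      intro k j
      induction k with
      | zero =>
        have hj : B.col j ∈ S := Submodule.subset_span ⟨j, rfl⟩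
        simpa using Submodule.mem_sup_right (S := R) hj
      | succ k ih =>
        have : (A ^ (k + 1)).mulVec (B.col j)
            = (A - l • (1 : Matrix (Fin n) (Fin n) ℂ)).mulVecLin ((A ^ k).mulVec (B.col j))
              + l • (A ^ k).mulVec (B.col j) := by
          rw [pow_succ', ← Matrix.mulVec_mulVec]
          simp [Matrix.sub_mulVec, Matrix.smul_mulVec]
        rw [this]
        exact add_mem (Submodule.mem_sup_left ⟨_, rfl⟩) (Submodule.smul_mem _ _ ih)
    have htop : R ⊔ S = ⊤ := by
      rw [eq_top_iff, ← hBt, Submodule.span_le]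
      rintro _ ⟨k, j, _, rfl⟩
      rw [hcol]
      exact key k j
    have h1 := Submodule.finrank_add_le_finrank_add_finrank R S
    rw [htop, finrank_top, Module.finrank_fin_fun] at h1
    have h2 : Module.finrank ℂ S ≤ m := by
      simpa [Set.finrank] using finrank_range_le_card (R := ℂ) B.col
    have h3 : (A - l • (1 : Matrix (Fin n) (Fin n) ℂ)).rank = Module.finrank ℂ R := rfl
    omega
end
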